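/- arXiv:alg-geom/9601012 — 3 statements merged into one kernel-verified Lean document; each statement's English description precedes it below -/
import Mathlib

section
/- Let U ⊆ ℂ be open, let f = f₀ + θf₁ be a superfunction on the (1|1)-dimensional superdomain over U (f₀, f₁ : U → Λ holomorphic), let ẑ ∈ Λ₀ with ẑ^red ∈ U, and let ρ ∈ Λ₁. Then the following are equivalent: (i) f is divisible by the irreducible divisor z − ẑ − θρ, i.e. there exist holomorphic functions g₀, g₁ : U → Λ such that f₀(z) = (z − ẑ)·g₀(z) and f₁(z) = (z − ẑ)·g₁(z) − ρ·g₀(z) for all z ∈ U; (ii) f(ẑ,ρ) = 0 and (Df)(ẑ,ρ) = 0, i.e. f₀(ẑ) + ρ·f₁(ẑ) = 0 and f₁(ẑ) + ρ·f₀′(ẑ) = 0, where D = ∂_θ + θ∂_z. -/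
noncomputable section

open ExteriorAlgebra

/-- `Λ n`: the exterior algebra of `ℂⁿ` (with its `n` odd generators `βᵢ`). -/
abbrev SuperAlg (n : ℕ) : Type := ExteriorAlgebra ℂ (Fin n → ℂ)

/-- The even part `Λ₀` of the exterior algebra, i.e. the degree-`0̄` part of its `ℤ₂`-grading. -/
def evenPart (n : ℕ) : Submodule ℂ (SuperAlg n) :=
  CliffordAlgebra.evenOdd (0 : QuadraticForm ℂ (Fin n → ℂ)) 0

/-- The odd part `Λ₁` of the exterior algebra, i.e. the degree-`1̄` part of its `ℤ₂`-grading. -/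
def oddPart (n : ℕ) : Submodule ℂ (SuperAlg n) :=
  CliffordAlgebra.evenOdd (0 : QuadraticForm ℂ (Fin n → ℂ)) 1

set_option synthInstance.maxHeartbeats 1000000 in
theorem superAlg_noZeroSMulDivisors (n : ℕ) : NoZeroSMulDivisors ℂ (SuperAlg n) :=
  inferInstance

theorem superAlg_exteriorPower_eq_bot (n i : ℕ) (hi : n < i) :
    (⋀[ℂ]^i (Fin n → ℂ) : Submodule ℂ (SuperAlg n)) = ⊥ := by
  rw [← ExteriorAlgebra.ιMulti_span_fixedDegree]
  refine le_bot_iff.mp (Submodule.span_le.mpr ?_)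
  rintro x ⟨v, rfl⟩
  have hv : ¬ LinearIndependent ℂ v := by
    intro h
    have hc := h.fintype_card_le_finrank
    simp only [Fintype.card_fin, Module.finrank_fin_fun] at hc
    omega
  haveI := superAlg_noZeroSMulDivisors n
  simpa using AlternatingMap.map_linearDependent (ιMulti ℂ i) v hv

/-- `Λ` is a finite-dimensional complex vector space (of dimension `2ⁿ`). -/
instance superAlg_moduleFinite (n : ℕ) : Module.Finite ℂ (SuperAlg n) := by
  classical
  rw [Module.finite_def]
  have hfg : ∀ i : ℕ, (⋀[ℂ]^i (Fin n → ℂ) : Submodule ℂ (SuperAlg n)).FG := by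
    intro i
    refine Submodule.FG.pow ?_ i
    rw [LinearMap.range_eq_map]
    exact Submodule.FG.map _ (Module.finite_def.mp inferInstance)
  have hint : DirectSum.IsInternal
      (fun i : ℕ => (⋀[ℂ]^i (Fin n → ℂ) : Submodule ℂ (SuperAlg n))) :=
    DirectSum.Decomposition.isInternal _
  have htop := hint.submodule_iSup_eq_top
  have hsup : (⊤ : Submodule ℂ (SuperAlg n))
      = ⨆ i ∈ Finset.range (n + 1), (⋀[ℂ]^i (Fin n → ℂ) : Submodule ℂ (SuperAlg n)) := by
    refine le_antisymm ?_ le_top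
    rw [← htop]
    refine iSup_le fun i => ?_
    rcases le_or_gt i n with hi | hi
    · exact le_biSup _ (Finset.mem_range.mpr (by omega))
    · rw [superAlg_exteriorPower_eq_bot n i hi]
      exact bot_le
  rw [hsup]
  exact Submodule.fg_biSup _ _ fun i _ => hfg i

/-- A norm on the finite-dimensional complex vector space `Λ`, transported from `ℂ^{2ⁿ}` by a
choice of basis.  (All norms on a finite-dimensional complex vector space are equivalent, so
the notions of holomorphy and derivative below do not depend on this choice; holomorphy is
equivalent to componentwise complex analyticity with respect to any basis.) -/
instance superAlg_normedAddCommGroup (n : ℕ) : NormedAddCommGroup (SuperAlg n) :=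
  NormedAddCommGroup.induced (SuperAlg n)
    (Fin (Module.finrank ℂ (SuperAlg n)) → ℂ)
    (Module.finBasis ℂ (SuperAlg n)).equivFun
    (Module.finBasis ℂ (SuperAlg n)).equivFun.injective

instance superAlg_normedSpace (n : ℕ) : NormedSpace ℂ (SuperAlg n) :=
  NormedSpace.induced ℂ (SuperAlg n) (Fin (Module.finrank ℂ (SuperAlg n)) → ℂ)
    (Module.finBasis ℂ (SuperAlg n)).equivFun

/-- The reduction `λ ↦ λ^red`: the image of `λ ∈ Λ` under the augmentation `Λ → ℂ`
(quotienting out nilpotents). -/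
def reduce (n : ℕ) (a : SuperAlg n) : ℂ :=
  ExteriorAlgebra.algebraMapInv (R := ℂ) (M := Fin n → ℂ) a

/-- The value `h(ẑ) = Σ_{m≥0} (1/m!)·h^{(m)}(ẑ^red)·(ẑ − ẑ^red)^m` of a holomorphic function
`h` at an even element `ẑ ∈ Λ₀` with `ẑ^red ∈ U`.  Since `ẑ − ẑ^red` lies in the nilpotent
ideal `𝔪` and `𝔪^{n+1} = 0`, all terms with `m > n` vanish, so the sum may be truncated at
`m = n`. -/
def evalNilp (n : ℕ) (h : ℂ → SuperAlg n) (w : SuperAlg n) : SuperAlg n :=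
  ∑ m ∈ Finset.range (n + 1),
    ((m.factorial : ℂ))⁻¹ •
      (iteratedDeriv m h (reduce n w) * (w - algebraMap ℂ (SuperAlg n) (reduce n w)) ^ m)

/-!
Multiplication by `z - ẑ` is `(z - a) - N`, where `a` is the reduction of `ẑ` and `N` is
multiplication by the nilpotent element `ẑ - a`; so `h(ẑ)` is the Taylor expansion of `h` at `a`
evaluated at the nilpotent operator `N`. Repeatedly splitting off the value at `a` divides any
holomorphic `h` by `(z - a) - N` with a constant remainder. Evaluation at `ẑ` kills the multiples
of `z - ẑ`, so that remainder is `h(ẑ)`, and `z - ẑ` divides `h` exactly when `h(ẑ) = 0`.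

If `f₀ = (z - ẑ) g₀`, then differentiating and evaluating at `ẑ` gives `f₀′(ẑ) = g₀(ẑ)`. Hence
`(Df)(ẑ, ρ)` is the value at `ẑ` of `f₁ + ρ g₀`, the function that `z - ẑ` has to divide. Moreover
`(Df)(ẑ, ρ) = 0` forces `ρ f₁(ẑ) = 0`, because `ρ² = 0`, so that `f(ẑ, ρ)` reduces to `f₀(ẑ)`.
-/

section TaylorEval

variable {𝕜 V : Type*} [NontriviallyNormedField 𝕜] [NormedAddCommGroup V] [NormedSpace 𝕜 V]

/-- The degree `n` Taylor polynomial of `h` at `a`, evaluated at the operator `a + N`. When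
`N ^ (n + 1) = 0` this is the value of `h` at the nilpotent thickening `a + N` of the point `a`. -/
def taylorEval (N : V →L[𝕜] V) (n : ℕ) (a : 𝕜) (h : 𝕜 → V) : V :=
  ∑ m ∈ Finset.range (n + 1), (m.factorial : 𝕜)⁻¹ • (N ^ m) (iteratedDeriv m h a)

variable {N R : V →L[𝕜] V} {n : ℕ} {a : 𝕜} {f g : 𝕜 → V}

theorem taylorEval_congr (h : f =ᶠ[nhds a] g) : taylorEval N n a f = taylorEval N n a g := by
  simp only [taylorEval, h.iteratedDeriv_eq]

theorem taylorEval_const (c : V) : taylorEval N n a (fun _ ↦ c) = c := by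
  simp [taylorEval, Finset.sum_range_succ', iteratedDeriv_const]

theorem taylorEval_add (hf : ContDiffAt 𝕜 n f a) (hg : ContDiffAt 𝕜 n g a) :
    taylorEval N n a (fun z ↦ f z + g z) = taylorEval N n a f + taylorEval N n a g := by
  rw [taylorEval, taylorEval, taylorEval, ← Finset.sum_add_distrib]
  refine Finset.sum_congr rfl fun m hm ↦ ?_
  have hmn : (m : WithTop ℕ∞) ≤ n := by exact_mod_cast Finset.mem_range_succ_iff.mp hm
  rw [iteratedDeriv_fun_add (hf.of_le hmn) (hg.of_le hmn), map_add, smul_add]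

theorem iteratedDeriv_clm_apply {W : Type*} [NormedAddCommGroup W] [NormedSpace 𝕜 W]
    (L : V →L[𝕜] W) (hf : ContDiffAt 𝕜 n f a) :
    iteratedDeriv n (fun z ↦ L (f z)) a = L (iteratedDeriv n f a) := by
  rw [iteratedDeriv_eq_iteratedFDeriv, iteratedDeriv_eq_iteratedFDeriv]
  exact DFunLike.congr_fun (L.iteratedFDeriv_comp_left hf le_rfl) fun _ ↦ 1

theorem taylorEval_clm_apply (hR : Commute R N) (hf : ContDiffAt 𝕜 n f a) :
    taylorEval N n a (fun z ↦ R (f z)) = R (taylorEval N n a f) := by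
  rw [taylorEval, taylorEval, map_sum]
  refine Finset.sum_congr rfl fun m hm ↦ ?_
  have hmn : (m : WithTop ℕ∞) ≤ n := by exact_mod_cast Finset.mem_range_succ_iff.mp hm
  have hcomm : R ((N ^ m) (iteratedDeriv m f a)) = (N ^ m) (R (iteratedDeriv m f a)) :=
    DFunLike.congr_fun (hR.pow_right m).eq (iteratedDeriv m f a)
  rw [iteratedDeriv_clm_apply R (hf.of_le hmn), map_smul, hcomm]

theorem taylorEval_add_clm_apply (hR : Commute R N) (hf : ContDiffAt 𝕜 n f a)
    (hg : ContDiffAt 𝕜 n g a) :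
    taylorEval N n a (fun z ↦ f z + R (g z)) = taylorEval N n a f + R (taylorEval N n a g) := by
  have hRg : ContDiffAt 𝕜 n (fun z ↦ R (g z)) a := R.contDiff.contDiffAt.comp a hg
  rw [taylorEval_add hf hRg, taylorEval_clm_apply hR hg]

theorem iteratedDeriv_succ_sub_smul_self (hg : ContDiffAt 𝕜 (n + 1) g a) :
    iteratedDeriv (n + 1) (fun z ↦ (z - a) • g z) a = ((n : 𝕜) + 1) • iteratedDeriv n g a := by
  have hsub : ContDiffAt 𝕜 (n + 1) (fun z ↦ z - a) a := contDiffAt_id.sub contDiffAt_const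
  have hsub_deriv : ∀ i, iteratedDeriv i (fun z ↦ z - a) a = if i = 1 then 1 else 0 := by
    rintro (_ | _ | i) <;> simp [iteratedDeriv_succ']
  have leibniz := iteratedDerivWithin_smul (n := n + 1) (Set.mem_univ a) uniqueDiffOn_univ
    hsub.contDiffWithinAt hg.contDiffWithinAt
  simp only [iteratedDerivWithin_univ, hsub_deriv] at leibniz
  change iteratedDeriv (n + 1) ((fun z ↦ z - a) • g) a = _
  simpa [ite_smul, ← Nat.cast_smul_eq_nsmul 𝕜] using leibniz

theorem taylorEval_sub_smul [CharZero 𝕜] (hN : N ^ (n + 1) = 0) (hg : ContDiffAt 𝕜 n g a) :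
    taylorEval N n a (fun z ↦ (z - a) • g z) = N (taylorEval N n a g) := by
  have hterm : ∀ m < n, ((m + 1).factorial : 𝕜)⁻¹ •
      (N ^ (m + 1)) (iteratedDeriv (m + 1) (fun z ↦ (z - a) • g z) a) =
        N ((m.factorial : 𝕜)⁻¹ • (N ^ m) (iteratedDeriv m g a)) := by
    intro m hm
    have hmn : ((m + 1 : ℕ) : WithTop ℕ∞) ≤ n := by exact_mod_cast hm
    have hm0 : (m : 𝕜) + 1 ≠ 0 := m.cast_add_one_ne_zero
    rw [iteratedDeriv_succ_sub_smul_self (by exact_mod_cast hg.of_le hmn), Nat.factorial_succ,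
      pow_succ', map_smul, map_smul, smul_smul, Nat.cast_mul, Nat.cast_succ, mul_inv_rev,
      inv_mul_cancel_right₀ hm0]
    rfl
  have hlast : N ((n.factorial : 𝕜)⁻¹ • (N ^ n) (iteratedDeriv n g a)) = 0 := by
    rw [map_smul, ← mul_apply_eq_comp, ← pow_succ', hN, zero_apply, smul_zero]
  rw [taylorEval, taylorEval, Finset.sum_range_succ', Finset.sum_range_succ, map_add, hlast,
    map_sum, Finset.sum_congr rfl fun m hm ↦ hterm m (Finset.mem_range.mp hm)]
  simp

theorem taylorEval_sub_smul_sub_clm_apply [CharZero 𝕜] (hN : N ^ (n + 1) = 0)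
    (hg : ContDiffAt 𝕜 n g a) :
    taylorEval N n a (fun z ↦ (z - a) • g z - N (g z)) = 0 := by
  have hsmul : ContDiffAt 𝕜 n (fun z ↦ (z - a) • g z) a :=
    (contDiffAt_id.sub contDiffAt_const).smul hg
  simp only [sub_eq_add_neg _ (N _), ← neg_apply]
  rw [taylorEval_add_clm_apply (Commute.refl N).neg_left hsmul hg, taylorEval_sub_smul hN hg,
    neg_apply, add_neg_cancel]

theorem taylorEval_deriv_sub_smul_sub_clm_apply [CharZero 𝕜] (hN : N ^ (n + 1) = 0)
    (hg : ContDiffAt 𝕜 (n + 1) g a) :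
    taylorEval N n a (deriv fun z ↦ (z - a) • g z - N (g z)) = taylorEval N n a g := by
  have hg_deriv : ContDiffAt 𝕜 n (deriv g) a :=
    (hg.fderiv_right le_rfl).clm_apply contDiffAt_const
  have hderiv : deriv (fun z ↦ (z - a) • g z - N (g z)) =ᶠ[nhds a]
      fun z ↦ g z + ((z - a) • deriv g z - N (deriv g z)) := by
    filter_upwards [hg.eventually (by simp)] with z hz
    have hgz : HasDerivAt g (deriv g z) z := (hz.differentiableAt (by simp)).hasDerivAt
    refine ((((hasDerivAt_id z).sub_const a).smul hgz).sub
      (N.hasFDerivAt.comp_hasDerivAt z hgz)).deriv.trans ?_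
    simp only [id, one_smul]
    abel
  have hmul : ContDiffAt 𝕜 n (fun z ↦ (z - a) • deriv g z - N (deriv g z)) a :=
    ((contDiffAt_id.sub contDiffAt_const).smul hg_deriv).sub
      (N.contDiff.contDiffAt.comp a hg_deriv)
  rw [taylorEval_congr hderiv, taylorEval_add (hg.of_le (by simp)) hmul,
    taylorEval_sub_smul_sub_clm_apply hN hg_deriv, add_zero]

theorem sub_smul_sum_iterate_dslope_sub (N : V →L[𝕜] V) (a z : 𝕜) (h : 𝕜 → V) (n : ℕ) :
    (z - a) • ∑ k ∈ Finset.range n, (N ^ k) ((dslope · a)^[k + 1] h z) -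
        N (∑ k ∈ Finset.range n, (N ^ k) ((dslope · a)^[k + 1] h z)) =
      h z - (N ^ n) ((dslope · a)^[n] h z) -
        ∑ k ∈ Finset.range n, (N ^ k) ((dslope · a)^[k] h a) := by
  induction n with
  | zero => simp
  | succ n ih =>
    have hstep : (z - a) • (dslope · a)^[n + 1] h z =
        (dslope · a)^[n] h z - (dslope · a)^[n] h a := by
      rw [Function.iterate_succ_apply', sub_smul_dslope]
    have hterm : (z - a) • (N ^ n) ((dslope · a)^[n + 1] h z) =
        (N ^ n) ((dslope · a)^[n] h z) - (N ^ n) ((dslope · a)^[n] h a) := by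
      rw [← map_smul, hstep, map_sub]
    rw [Finset.sum_range_succ, Finset.sum_range_succ _ n, smul_add, map_add, add_sub_add_comm, ih,
      hterm, ← mul_apply_eq_comp, ← pow_succ']
    abel

end TaylorEval

section Holomorphic

variable {V : Type*} [NormedAddCommGroup V] [NormedSpace ℂ V] [CompleteSpace V]
  {N R : V →L[ℂ] V} {n : ℕ} {U : Set ℂ} {a : ℂ} {g h f₀ f₁ : ℂ → V}

theorem differentiableOn_iterate_dslope (hU : U ∈ nhds a) (hh : DifferentiableOn ℂ h U) (k : ℕ) :
    DifferentiableOn ℂ ((dslope · a)^[k] h) U := by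
  induction k with
  | zero => exact hh
  | succ k ih =>
    rw [Function.iterate_succ_apply']
    exact (Complex.differentiableOn_dslope hU).2 ih

theorem exists_eq_sub_smul_sub_add_taylorEval (hN : N ^ (n + 1) = 0) (hU : U ∈ nhds a)
    (hh : DifferentiableOn ℂ h U) :
    ∃ g, DifferentiableOn ℂ g U ∧
      ∀ z, h z = (z - a) • g z - N (g z) + taylorEval N n a h := by
  set g : ℂ → V := fun z ↦ ∑ k ∈ Finset.range (n + 1), (N ^ k) ((dslope · a)^[k + 1] h z)
  set c : V := ∑ k ∈ Finset.range (n + 1), (N ^ k) ((dslope · a)^[k] h a)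
  have hg : DifferentiableOn ℂ g U := DifferentiableOn.fun_sum fun k _ ↦
    (N ^ k).differentiable.comp_differentiableOn (differentiableOn_iterate_dslope hU hh (k + 1))
  have hdiv : ∀ z, h z = (z - a) • g z - N (g z) + c := fun z ↦ by
    rw [sub_smul_sum_iterate_dslope_sub N a z h (n + 1), hN]
    simp [c]
  have hc : taylorEval N n a h = c := by
    have hga : ContDiffAt ℂ n g a := (hg.analyticAt hU).contDiffAt
    have hmul : ContDiffAt ℂ n (fun z ↦ (z - a) • g z - N (g z)) a :=
      ((contDiffAt_id.sub contDiffAt_const).smul hga).sub (N.contDiff.contDiffAt.comp a hga)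
    rw [funext hdiv, taylorEval_add hmul contDiffAt_const,
      taylorEval_sub_smul_sub_clm_apply hN hga, taylorEval_const, zero_add]
  exact ⟨g, hg, fun z ↦ hc ▸ hdiv z⟩

theorem taylorEval_deriv_eq_of_eqOn (hN : N ^ (n + 1) = 0) (hU : U ∈ nhds a)
    (hg : DifferentiableOn ℂ g U) (hh : ∀ z ∈ U, h z = (z - a) • g z - N (g z)) :
    taylorEval N n a (deriv h) = taylorEval N n a g := by
  have hnear : h =ᶠ[nhds a] fun z ↦ (z - a) • g z - N (g z) := Filter.eventually_of_mem hU hh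
  rw [taylorEval_congr hnear.deriv,
    taylorEval_deriv_sub_smul_sub_clm_apply hN (hg.analyticAt hU).contDiffAt]

theorem exists_eq_sub_smul_sub_iff (hN : N ^ (n + 1) = 0) (hU : U ∈ nhds a)
    (hh : DifferentiableOn ℂ h U) :
    (∃ g, DifferentiableOn ℂ g U ∧ ∀ z ∈ U, h z = (z - a) • g z - N (g z)) ↔
      taylorEval N n a h = 0 := by
  constructor
  · rintro ⟨g, hg, hdiv⟩
    rw [taylorEval_congr (Filter.eventually_of_mem hU hdiv),
      taylorEval_sub_smul_sub_clm_apply hN (hg.analyticAt hU).contDiffAt]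
  · intro hzero
    obtain ⟨g, hg, hdiv⟩ := exists_eq_sub_smul_sub_add_taylorEval hN hU hh
    exact ⟨g, hg, fun z _ ↦ by rw [hdiv z, hzero, add_zero]⟩

theorem exists_superDivision_iff (hN : N ^ (n + 1) = 0) (hRN : Commute R N) (hR : R * R = 0)
    (hU : U ∈ nhds a) (hf₀ : DifferentiableOn ℂ f₀ U) (hf₁ : DifferentiableOn ℂ f₁ U) :
    (∃ g₀ g₁ : ℂ → V, DifferentiableOn ℂ g₀ U ∧ DifferentiableOn ℂ g₁ U ∧
        ∀ z ∈ U, f₀ z = (z - a) • g₀ z - N (g₀ z) ∧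
          f₁ z = (z - a) • g₁ z - N (g₁ z) - R (g₀ z)) ↔
      taylorEval N n a f₀ + R (taylorEval N n a f₁) = 0 ∧
        taylorEval N n a f₁ + R (taylorEval N n a (deriv f₀)) = 0 := by
  have hRR (v : V) : R (R v) = 0 := DFunLike.congr_fun hR v
  have hsum {g₀ : ℂ → V} (hg₀ : DifferentiableOn ℂ g₀ U) :
      DifferentiableOn ℂ (fun z ↦ f₁ z + R (g₀ z)) U :=
    hf₁.add (R.differentiable.comp_differentiableOn hg₀)
  have taylorEval_sum {g₀ : ℂ → V} (hg₀ : DifferentiableOn ℂ g₀ U)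
      (hdiv₀ : ∀ z ∈ U, f₀ z = (z - a) • g₀ z - N (g₀ z)) :
      taylorEval N n a (fun z ↦ f₁ z + R (g₀ z)) =
        taylorEval N n a f₁ + R (taylorEval N n a (deriv f₀)) := by
    rw [taylorEval_add_clm_apply hRN (hf₁.analyticAt hU).contDiffAt (hg₀.analyticAt hU).contDiffAt,
      taylorEval_deriv_eq_of_eqOn hN hU hg₀ hdiv₀]
  have map_taylorEval_eq_zero
      (hDf : taylorEval N n a f₁ + R (taylorEval N n a (deriv f₀)) = 0) :
      R (taylorEval N n a f₁) = 0 := by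
    rw [eq_neg_of_add_eq_zero_left hDf, map_neg, hRR, neg_zero]
  constructor
  · rintro ⟨g₀, g₁, hg₀, hg₁, hdiv⟩
    have hdiv₀ : ∀ z ∈ U, f₀ z = (z - a) • g₀ z - N (g₀ z) := fun z hz ↦ (hdiv z hz).1
    have hDf := (exists_eq_sub_smul_sub_iff hN hU (hsum hg₀)).1
      ⟨g₁, hg₁, fun z hz ↦ eq_sub_iff_add_eq.1 (hdiv z hz).2⟩
    rw [taylorEval_sum hg₀ hdiv₀] at hDf
    exact ⟨by rw [(exists_eq_sub_smul_sub_iff hN hU hf₀).1 ⟨g₀, hg₀, hdiv₀⟩,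
      map_taylorEval_eq_zero hDf, add_zero], hDf⟩
  · rintro ⟨hf, hDf⟩
    rw [map_taylorEval_eq_zero hDf, add_zero] at hf
    obtain ⟨g₀, hg₀, hdiv₀⟩ := (exists_eq_sub_smul_sub_iff hN hU hf₀).2 hf
    obtain ⟨g₁, hg₁, hdiv₁⟩ :=
      (exists_eq_sub_smul_sub_iff hN hU (hsum hg₀)).2 ((taylorEval_sum hg₀ hdiv₀).trans hDf)
    exact ⟨g₀, g₁, hg₀, hg₁, fun z hz ↦ ⟨hdiv₀ z hz, eq_sub_of_add_eq (hdiv₁ z hz)⟩⟩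

end Holomorphic

section ExteriorAlgebra

variable {R M : Type*} [CommRing R] [AddCommGroup M] [Module R M]

theorem mul_eq_smul_mul_of_mem_evenOdd {i j : ZMod 2} {x y : ExteriorAlgebra R M}
    (hx : x ∈ CliffordAlgebra.evenOdd (0 : QuadraticForm R M) i)
    (hy : y ∈ CliffordAlgebra.evenOdd (0 : QuadraticForm R M) j) :
    x * y = (-1 : ℤˣ) ^ (j * i) • (y * x) := by
  have hortho (v w : M) : (0 : QuadraticForm R M).IsOrtho v w := by
    simp [QuadraticMap.isOrtho_def]
  simpa using CliffordAlgebra.map_mul_map_of_isOrtho_of_mem_evenOdd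
    (QuadraticMap.Isometry.id (0 : QuadraticForm R M))
    (QuadraticMap.Isometry.id (0 : QuadraticForm R M)) hortho x y hx hy

theorem commute_of_mem_evenOdd_zero {x : ExteriorAlgebra R M}
    (hx : x ∈ CliffordAlgebra.evenOdd (0 : QuadraticForm R M) 0) (y : ExteriorAlgebra R M) :
    Commute x y := by
  have hcomm {j : ZMod 2} {y : ExteriorAlgebra R M}
      (hy : y ∈ CliffordAlgebra.evenOdd (0 : QuadraticForm R M) j) : Commute x y := by
    simpa [commute_iff_eq] using mul_eq_smul_mul_of_mem_evenOdd hx hy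
  have hy : y ∈ CliffordAlgebra.evenOdd (0 : QuadraticForm R M) 0 ⊔
      CliffordAlgebra.evenOdd (0 : QuadraticForm R M) 1 :=
    (CliffordAlgebra.evenOdd_isCompl (0 : QuadraticForm R M)).sup_eq_top ▸ Submodule.mem_top
  obtain ⟨y₀, hy₀, y₁, hy₁, rfl⟩ := Submodule.mem_sup.mp hy
  exact (hcomm hy₀).add_right (hcomm hy₁)

theorem mul_self_eq_neg_of_mem_evenOdd_one {x : ExteriorAlgebra R M}
    (hx : x ∈ CliffordAlgebra.evenOdd (0 : QuadraticForm R M) 1) : x * x = -(x * x) := by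
  simpa using mul_eq_smul_mul_of_mem_evenOdd hx hx

variable (R M) in
theorem top_mul_range_ι_le :
    (⊤ : Submodule R (ExteriorAlgebra R M)) * LinearMap.range (ι R) ≤
      LinearMap.range (ι R) * ⊤ := by
  have htop : (⊤ : Submodule R (ExteriorAlgebra R M)) = ⨆ i : ℕ, LinearMap.range (ι R) ^ i :=
    (CliffordAlgebra.iSup_ι_range_eq_top (0 : QuadraticForm R M)).symm
  conv_lhs => rw [htop, Submodule.iSup_mul]
  refine iSup_le fun i ↦ ?_
  rw [← pow_succ, pow_succ']
  exact mul_le_mul' le_rfl le_top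

theorem mul_top_pow_le {A : Type*} [Semiring A] [Algebra R A] {P : Submodule R A}
    (hP : ⊤ * P ≤ P * ⊤) (k : ℕ) : (P * ⊤) ^ k ≤ P ^ k * ⊤ := by
  induction k with
  | zero => simp
  | succ k ih =>
    calc (P * ⊤) ^ (k + 1) ≤ P ^ k * ⊤ * (P * ⊤) := by rw [pow_succ]; gcongr
      _ = P ^ k * (⊤ * P) * ⊤ := by simp only [mul_assoc]
      _ ≤ P ^ k * (P * ⊤) * ⊤ := by gcongr
      _ = P ^ (k + 1) * (⊤ * ⊤) := by simp only [pow_succ, mul_assoc]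
      _ ≤ P ^ (k + 1) * ⊤ := by gcongr; exact le_top

theorem sub_algebraMap_algebraMapInv_mem (x : ExteriorAlgebra R M) :
    x - algebraMap R _ (algebraMapInv x) ∈
      LinearMap.range (ι R) * (⊤ : Submodule R (ExteriorAlgebra R M)) := by
  induction x using ExteriorAlgebra.induction with
  | algebraMap r => simp [algebraMap_leftInverse M r]
  | ι v =>
    have hv : ι R v ∈ LinearMap.range (ι R) * (⊤ : Submodule R (ExteriorAlgebra R M)) := by
      simpa using Submodule.mul_mem_mul (LinearMap.mem_range_self (ι R) v)
        (Submodule.mem_top (x := (1 : ExteriorAlgebra R M)))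
    simpa [algebraMapInv] using hv
  | add x y hx hy => simpa [add_sub_add_comm] using add_mem hx hy
  | mul x y hx hy =>
    have hsplit : x * y - algebraMap R _ (algebraMapInv (x * y)) =
        (x - algebraMap R _ (algebraMapInv x)) * y +
          algebraMapInv x • (y - algebraMap R _ (algebraMapInv y)) := by
      rw [Algebra.smul_def, map_mul, map_mul]
      noncomm_ring
    have hxy := Submodule.mul_mem_mul hx (Submodule.mem_top (x := y))
    rw [mul_assoc] at hxy
    rw [hsplit]
    exact add_mem (SetLike.le_def.mp (mul_le_mul' le_rfl le_top) hxy) (Submodule.smul_mem _ _ hy)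

end ExteriorAlgebra

section SuperAlg

variable {n : ℕ}

theorem sub_algebraMap_reduce_pow_eq_zero (x : SuperAlg n) :
    (x - algebraMap ℂ (SuperAlg n) (reduce n x)) ^ (n + 1) = 0 := by
  have hmem := mul_top_pow_le (top_mul_range_ι_le ℂ (Fin n → ℂ)) (n + 1)
    (Submodule.pow_mem_pow _ (sub_algebraMap_algebraMapInv_mem x) (n + 1))
  have hbot : (LinearMap.range (ι ℂ) : Submodule ℂ (SuperAlg n)) ^ (n + 1) = ⊥ :=
    superAlg_exteriorPower_eq_bot n (n + 1) n.lt_succ_self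
  rwa [hbot, Submodule.bot_mul,
    Submodule.mem_bot] at hmem

/-- Left multiplication on `SuperAlg n` as an algebra homomorphism into the continuous linear
operators, the setting of `taylorEval`; `SuperAlg n` is not a normed algebra. -/
def mulLeftCLM (n : ℕ) : SuperAlg n →ₐ[ℂ] (SuperAlg n →L[ℂ] SuperAlg n) :=
  (Module.End.toContinuousLinearMap (SuperAlg n)).toAlgHom.comp (Algebra.lmul ℂ (SuperAlg n))

theorem mulLeftCLM_apply (x y : SuperAlg n) : mulLeftCLM n x y = x * y := rfl

theorem evalNilp_eq_taylorEval {w : SuperAlg n} (hw : w ∈ Subalgebra.center ℂ (SuperAlg n))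
    (h : ℂ → SuperAlg n) :
    evalNilp n h w = taylorEval
      (mulLeftCLM n (w - algebraMap ℂ (SuperAlg n) (reduce n w))) n (reduce n w) h := by
  have hcentral : w - algebraMap ℂ (SuperAlg n) (reduce n w) ∈ Subalgebra.center ℂ (SuperAlg n) :=
    sub_mem hw (Subalgebra.algebraMap_mem _ _)
  refine Finset.sum_congr rfl fun m _ ↦ ?_
  rw [← map_pow, mulLeftCLM_apply, Subalgebra.mem_center_iff.mp (pow_mem hcentral m)]

theorem mem_center_of_mem_evenPart {x : SuperAlg n} (hx : x ∈ evenPart n) :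
    x ∈ Subalgebra.center ℂ (SuperAlg n) :=
  Subalgebra.mem_center_iff.mpr fun y ↦ (commute_of_mem_evenOdd_zero hx y).symm

theorem mul_self_eq_zero_of_mem_oddPart {x : SuperAlg n} (hx : x ∈ oddPart n) : x * x = 0 := by
  have htwo : (2 : ℂ) • (x * x) = 0 := by
    rw [two_smul, add_eq_zero_iff_eq_neg]
    exact mul_self_eq_neg_of_mem_evenOdd_one hx
  exact (smul_eq_zero.mp htwo).resolve_left two_ne_zero

theorem statement0_general (n : ℕ) (U : Set ℂ) (hU : IsOpen U) (f₀ f₁ : ℂ → SuperAlg n)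
    (hf₀ : DifferentiableOn ℂ f₀ U) (hf₁ : DifferentiableOn ℂ f₁ U)
    (zh : SuperAlg n) (hzh : zh ∈ Subalgebra.center ℂ (SuperAlg n)) (hzred : reduce n zh ∈ U)
    (ρ : SuperAlg n) (hρ : ρ * ρ = 0) :
    (∃ g₀ g₁ : ℂ → SuperAlg n, DifferentiableOn ℂ g₀ U ∧ DifferentiableOn ℂ g₁ U ∧
        ∀ z ∈ U, f₀ z = (algebraMap ℂ (SuperAlg n) z - zh) * g₀ z ∧
          f₁ z = (algebraMap ℂ (SuperAlg n) z - zh) * g₁ z - ρ * g₀ z) ↔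
      (evalNilp n f₀ zh + ρ * evalNilp n f₁ zh = 0 ∧
        evalNilp n f₁ zh + ρ * evalNilp n (deriv f₀) zh = 0) := by
  have : CompleteSpace (SuperAlg n) := FiniteDimensional.complete ℂ _
  set ν : SuperAlg n := zh - algebraMap ℂ (SuperAlg n) (reduce n zh) with hν
  have hN : mulLeftCLM n ν ^ (n + 1) = 0 := by
    rw [← map_pow, sub_algebraMap_reduce_pow_eq_zero, map_zero]
  have hcentral : ν ∈ Subalgebra.center ℂ (SuperAlg n) :=
    sub_mem hzh (Subalgebra.algebraMap_mem _ _)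
  have hcomm : Commute (mulLeftCLM n ρ) (mulLeftCLM n ν) :=
    Commute.map (Subalgebra.mem_center_iff.mp hcentral ρ) (mulLeftCLM n)
  have hsq : mulLeftCLM n ρ * mulLeftCLM n ρ = 0 := by rw [← map_mul, hρ, map_zero]
  have hmul (z : ℂ) (y : SuperAlg n) : (algebraMap ℂ (SuperAlg n) z - zh) * y =
      (z - reduce n zh) • y - mulLeftCLM n ν y := by
    rw [mulLeftCLM_apply, Algebra.smul_def, map_sub, hν]
    noncomm_ring
  simp only [evalNilp_eq_taylorEval hzh, hmul, ← mulLeftCLM_apply]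
  exact exists_superDivision_iff hN hcomm hsq (hU.mem_nhds hzred) hf₀ hf₁

end SuperAlg

/-- Let `U ⊆ ℂ` be open, `f = f₀ + θf₁` a superfunction on the
`(1|1)`-dimensional superdomain over `U` (`f₀, f₁ : U → Λ` holomorphic), `ẑ ∈ Λ₀` with
`ẑ^red ∈ U` and `ρ ∈ Λ₁`.  Then `f` is divisible by the irreducible divisor `z − ẑ − θρ`
(i.e. `f₀(z) = (z − ẑ)·g₀(z)` and `f₁(z) = (z − ẑ)·g₁(z) − ρ·g₀(z)` for holomorphic `g₀, g₁`)
if and only if `f(ẑ,ρ) = 0` and `(Df)(ẑ,ρ) = 0`, i.e. `f₀(ẑ) + ρ·f₁(ẑ) = 0` and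
`f₁(ẑ) + ρ·f₀′(ẑ) = 0`. -/
theorem statement0 (n : ℕ) (U : Set ℂ) (hU : IsOpen U) (f₀ f₁ : ℂ → SuperAlg n)
    (hf₀ : DifferentiableOn ℂ f₀ U) (hf₁ : DifferentiableOn ℂ f₁ U)
    (zh : SuperAlg n) (hzh : zh ∈ evenPart n) (hzred : reduce n zh ∈ U)
    (ρ : SuperAlg n) (hρ : ρ ∈ oddPart n) :
    (∃ g₀ g₁ : ℂ → SuperAlg n, DifferentiableOn ℂ g₀ U ∧ DifferentiableOn ℂ g₁ U ∧
        ∀ z ∈ U, f₀ z = (algebraMap ℂ (SuperAlg n) z - zh) * g₀ z ∧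
          f₁ z = (algebraMap ℂ (SuperAlg n) z - zh) * g₁ z - ρ * g₀ z) ↔
      (evalNilp n f₀ zh + ρ * evalNilp n f₁ zh = 0 ∧
        evalNilp n f₁ zh + ρ * evalNilp n (deriv f₀) zh = 0) := by
  exact statement0_general n U hU f₀ f₁ hf₀ hf₁ zh (mem_center_of_mem_evenPart hzh) hzred ρ
    (mul_self_eq_zero_of_mem_oddPart hρ)

end
end

section
/- Let U ⊆ ℂ be a nonempty open simply connected set. Define, on 4-tuples h = (h₀,h₁,h₂,h₃) of holomorphic functions U → Λ (representing the N=2 superfunction h₀ + θh₁ + ρh₂ + θρh₃ in two auxiliary odd variables θ, ρ), the operators D_C h := (h₂, −h₃, 0, 0) (representing ∂_ρ h) and D̂_C h := (h₁, 0, h₃ + h₀′, −h₁′) (representing (∂_θ + ρ∂_z)h). Then D_C∘D_C = 0 and D̂_C∘D̂_C = 0, and the Poincaré lemma holds: for any two such tuples f and g with D_C f = 0 and D̂_C g = 0 there exists a tuple H of holomorphic functions U → Λ with D_C H = f and D̂_C H = g, and H is unique up to adding a constant tuple (c,0,0,0) with c ∈ Λ. -/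
noncomputable section

open ExteriorAlgebra

/-- A tuple `(h₀, h₁, h₂, h₃)` of functions `ℂ → Λ`, representing the `N = 2` superfunction
`h₀ + θh₁ + ρh₂ + θρh₃` in the two auxiliary odd variables `θ`, `ρ`. -/
abbrev SF2 (n : ℕ) : Type :=
  (ℂ → SuperAlg n) × (ℂ → SuperAlg n) × (ℂ → SuperAlg n) × (ℂ → SuperAlg n)

/-- The operator `D_C = ∂_ρ`:  `D_C (h₀,h₁,h₂,h₃) = (h₂, −h₃, 0, 0)`. -/
def DC {n : ℕ} (h : SF2 n) : SF2 n :=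
  (h.2.2.1, fun z => -(h.2.2.2 z), fun _ => 0, fun _ => 0)

/-- The operator `D̂_C = ∂_θ + ρ∂_z`:  `D̂_C (h₀,h₁,h₂,h₃) = (h₁, 0, h₃ + h₀′, −h₁′)`. -/
def DhatC {n : ℕ} (h : SF2 n) : SF2 n :=
  (h.2.1, fun _ => 0, fun z => h.2.2.2 z + deriv h.1 z, fun z => -(deriv h.2.1 z))

/-- All four components are holomorphic on `U`. -/
def HolOn2 {n : ℕ} (U : Set ℂ) (h : SF2 n) : Prop :=
  DifferentiableOn ℂ h.1 U ∧ DifferentiableOn ℂ h.2.1 U ∧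
  DifferentiableOn ℂ h.2.2.1 U ∧ DifferentiableOn ℂ h.2.2.2 U

/-- Componentwise equality of two tuples on `U`. -/
def EqOn2 {n : ℕ} (U : Set ℂ) (h h' : SF2 n) : Prop :=
  Set.EqOn h.1 h'.1 U ∧ Set.EqOn h.2.1 h'.2.1 U ∧
  Set.EqOn h.2.2.1 h'.2.2.1 U ∧ Set.EqOn h.2.2.2 h'.2.2.2 U

/-! With `K` a primitive of `g₂ + f₁`, the tuple `(K, g₀, f₀, -f₁)` solves both equations, and a
tuple killed by both operators vanishes except for its first entry, whose derivative is zero.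
A primitive of a holomorphic function on a simply connected open set is found by gluing primitives
on discs: the germs of all local primitives form a covering space, and a section of it, which
exists by simple connectedness, is a global primitive. -/

section Gluing

open Filter Topology

/-- Functions `fn i` with values in a group `A`, to be thought of as defined on the open sets
`baseSet i` covering `X` only, any two of which differ by a locally constant function where both
are defined; the guiding example is the family of local primitives of a function. As in
`FiberBundleCore`, the covering property is encoded by a choice of an index `indexAt x` of a set
containing `x`. -/
structure LocallyConstantAtlas (ι X A : Type*) [TopologicalSpace X] [AddGroup A] where
  baseSet : ι → Set X
  isOpen_baseSet : ∀ i, IsOpen (baseSet i)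
  indexAt : X → ι
  mem_baseSet_at : ∀ x, x ∈ baseSet (indexAt x)
  fn : ι → X → A
  eventually_sub_eq : ∀ i j, ∀ x ∈ baseSet i ∩ baseSet j,
    ∀ᶠ y in 𝓝 x, fn i y - fn j y = fn i x - fn j x

namespace LocallyConstantAtlas

variable {ι X A : Type*} [TopologicalSpace X] [AddGroup A] (𝒜 : LocallyConstantAtlas ι X A)

/-- The bundle with discrete fibre `A` of germs of functions of the form `c + fn i`: the point over
`x` with coordinate `c` in the chart `i` stands for the germ of `c + fn i` at `x`. -/
def germBundle : FiberBundleCore ι X (WithDiscreteTopology A) where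
  baseSet := 𝒜.baseSet
  isOpen_baseSet := 𝒜.isOpen_baseSet
  indexAt := 𝒜.indexAt
  mem_baseSet_at := 𝒜.mem_baseSet_at
  coordChange i j x c := .toTopology _ (c.ofTopology + (𝒜.fn i x - 𝒜.fn j x))
  coordChange_self i x _ c := by simp
  continuousOn_coordChange i j := by
    rintro ⟨x, c⟩ ⟨hx, -⟩
    refine ContinuousAt.continuousWithinAt (tendsto_nhds_of_eventually_eq ?_)
    rw [nhds_prod_eq, nhds_discrete (WithDiscreteTopology A)]
    filter_upwards [(𝒜.eventually_sub_eq i j x hx).prod_mk (eventually_pure.2 rfl)] with p ⟨h₁, h₂⟩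
    rw [h₁, h₂]
  coordChange_comp i j k x _ c := by simp [add_assoc]

/-- The value at the base point of the germ that a point of the germ bundle stands for. -/
def germValue (p : 𝒜.germBundle.TotalSpace) : A :=
  p.2.ofTopology + 𝒜.fn (𝒜.indexAt p.1) p.1

theorem germValue_eq_localTriv_add (i : ι) (p : 𝒜.germBundle.TotalSpace) :
    𝒜.germValue p = (𝒜.germBundle.localTriv i p).2.ofTopology + 𝒜.fn i p.1 := by
  rw [FiberBundleCore.localTriv_apply]
  simp [germValue, germBundle, add_assoc]

theorem exists_section_germBundle [SimplyConnectedSpace X] [LocallyPathConnectedSpace X] :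
    ∃ s : C(X, 𝒜.germBundle.TotalSpace), ∀ x, (s x).1 = x := by
  have isCoveringMap_proj : IsCoveringMap 𝒜.germBundle.proj := FiberBundle.isCoveringMap
  obtain ⟨x₀⟩ : Nonempty X := inferInstance
  obtain ⟨s, ⟨-, hs⟩, -⟩ := isCoveringMap_proj.existsUnique_continuousMap_lifts
    (.id X) x₀ ⟨x₀, .toTopology _ 0⟩ rfl
  exact ⟨s, congrFun hs⟩

variable {𝒜} in
theorem eventually_localTriv_section_eq {s : C(X, 𝒜.germBundle.TotalSpace)}
    (hs : ∀ x, (s x).1 = x) {i : ι} {x : X} (hx : x ∈ 𝒜.baseSet i) :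
    ∀ᶠ y in 𝓝 x,
      (𝒜.germBundle.localTriv i (s y)).2 = (𝒜.germBundle.localTriv i (s x)).2 := by
  have mem_source : s x ∈ (𝒜.germBundle.localTriv i).source := by
    rw [FiberBundleCore.mem_localTriv_source, hs]
    exact hx
  have continuousAt_coord : ContinuousAt (fun y ↦ (𝒜.germBundle.localTriv i (s y)).2) x :=
    (((𝒜.germBundle.localTriv i).continuousAt mem_source).comp s.continuous.continuousAt).snd
  exact continuousAt_coord.eventually_mem (mem_nhds_discrete.2 (Set.mem_singleton _))

theorem exists_eventually_eq_const_add [SimplyConnectedSpace X] [LocallyPathConnectedSpace X] :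
    ∃ F : X → A, ∀ i, ∀ x ∈ 𝒜.baseSet i, ∃ c, ∀ᶠ y in 𝓝 x, F y = c + 𝒜.fn i y := by
  obtain ⟨s, hs⟩ := 𝒜.exists_section_germBundle
  refine ⟨fun x ↦ 𝒜.germValue (s x), fun i x hx ↦
    ⟨(𝒜.germBundle.localTriv i (s x)).2.ofTopology, ?_⟩⟩
  filter_upwards [eventually_localTriv_section_eq hs hx] with y hy
  rw [𝒜.germValue_eq_localTriv_add i, hy, hs]

end LocallyConstantAtlas

end Gluing

section Primitive

open Complex Filter Metric Set Topology

theorem eventually_sub_eq_of_hasDerivAt {𝕜 E : Type*} [RCLike 𝕜] [NormedAddCommGroup E]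
    [NormedSpace 𝕜 E] {f G₁ G₂ : 𝕜 → E} {V : Set 𝕜} (hV : IsOpen V)
    (hG₁ : ∀ z ∈ V, HasDerivAt G₁ (f z) z) (hG₂ : ∀ z ∈ V, HasDerivAt G₂ (f z) z)
    {x : 𝕜} (hx : x ∈ V) :
    ∀ᶠ y in 𝓝 x, G₁ y - G₂ y = G₁ x - G₂ x := by
  have hasDerivAt_sub (z : 𝕜) (hz : z ∈ V) : HasDerivAt (G₁ - G₂) 0 z := by
    simpa using (hG₁ z hz).sub (hG₂ z hz)
  have isOpen_fiber : IsOpen (V ∩ (G₁ - G₂) ⁻¹' {(G₁ - G₂) x}) :=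
    hV.isOpen_inter_preimage_of_deriv_eq_zero
      (fun z hz ↦ (hasDerivAt_sub z hz).differentiableAt.differentiableWithinAt)
      (fun z hz ↦ (hasDerivAt_sub z hz).deriv) _
  exact mem_of_superset (isOpen_fiber.mem_nhds ⟨hx, rfl⟩) fun y hy ↦ hy.2

variable {E : Type*} [NormedAddCommGroup E] [NormedSpace ℂ E] {f : ℂ → E} {U : Set ℂ}

/-- The local primitives `G x` of `f` on the open neighbourhoods `V x` of the points of `U`, as
functions on the subspace `U`. -/
def primitiveAtlas {V : U → Set ℂ} {G : U → ℂ → E} (hV : ∀ x, IsOpen (V x))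
    (hVx : ∀ x, (x : ℂ) ∈ V x) (hG : ∀ x, ∀ z ∈ V x, HasDerivAt (G x) (f z) z) :
    LocallyConstantAtlas U U E where
  baseSet x := Subtype.val ⁻¹' V x
  isOpen_baseSet x := (hV x).preimage continuous_subtype_val
  indexAt := id
  mem_baseSet_at := hVx
  fn x z := G x z
  eventually_sub_eq i j _ hx := continuous_subtype_val.continuousAt.eventually <|
    eventually_sub_eq_of_hasDerivAt ((hV i).inter (hV j)) (fun z hz ↦ hG i z hz.1)
      (fun z hz ↦ hG j z hz.2) hx

theorem isExactOn_of_locally_isExactOn (hU : IsOpen U) (hsc : IsSimplyConnected U)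
    (hf : ∀ x ∈ U, ∃ V, IsOpen V ∧ x ∈ V ∧ IsExactOn f V) : IsExactOn f U := by
  have := hsc.simplyConnectedSpace
  have := hU.locallyPathConnectedSpace
  choose V hV hVx G hG using fun x : U ↦ hf x x.2
  obtain ⟨F, hF⟩ := (primitiveAtlas hV hVx hG).exists_eventually_eq_const_add
  refine ⟨Function.extend (↑) F 0, fun z hz ↦ ?_⟩
  obtain ⟨c, hc⟩ := hF ⟨z, hz⟩ ⟨z, hz⟩ (hVx _)
  refine ((hG ⟨z, hz⟩ z (hVx _)).const_add c).congr_of_eventuallyEq ?_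
  rw [nhds_subtype_eq_comap, eventually_comap] at hc
  filter_upwards [hc, hU.mem_nhds hz] with y hy hyU
  exact (Subtype.val_injective.extend_apply F 0 ⟨y, hyU⟩).trans (hy ⟨y, hyU⟩ rfl)

theorem isExactOn_of_isSimplyConnected [CompleteSpace E] (hU : IsOpen U)
    (hsc : IsSimplyConnected U) (hf : DifferentiableOn ℂ f U) : IsExactOn f U := by
  refine isExactOn_of_locally_isExactOn hU hsc fun x hx ↦ ?_
  obtain ⟨r, hr, hrU⟩ := Metric.isOpen_iff.1 hU x hx
  exact ⟨ball x r, isOpen_ball, mem_ball_self hr, (hf.mono hrU).isExactOn_ball⟩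

end Primitive

section Superfunctions

open Set

variable {n : ℕ} {U : Set ℂ}

theorem DC_DC (h : SF2 n) : DC (DC h) = 0 := by
  simp only [DC, neg_zero]
  rfl

theorem DhatC_DhatC (h : SF2 n) : DhatC (DhatC h) = 0 := by
  simp only [DhatC, deriv_const, neg_add_cancel, neg_zero]
  rfl

theorem EqOn2.symm {h h' : SF2 n} (e : EqOn2 U h h') : EqOn2 U h' h :=
  ⟨e.1.symm, e.2.1.symm, e.2.2.1.symm, e.2.2.2.symm⟩

theorem EqOn2.trans {h h' h'' : SF2 n} (e : EqOn2 U h h') (e' : EqOn2 U h' h'') :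
    EqOn2 U h h'' :=
  ⟨e.1.trans e'.1, e.2.1.trans e'.2.1, e.2.2.1.trans e'.2.2.1, e.2.2.2.trans e'.2.2.2⟩

theorem eqOn2_DC_of_DC_eq_zero {f : SF2 n} (hf : EqOn2 U (DC f) 0) (h₀ h₁ : ℂ → SuperAlg n) :
    EqOn2 U (DC (h₀, h₁, f.1, -f.2.1)) f := by
  obtain ⟨f₂_eq_zero, neg_f₃_eq_zero, -, -⟩ := hf
  exact ⟨fun _ _ ↦ rfl, fun _ _ ↦ neg_neg _, f₂_eq_zero.symm,
    fun z hz ↦ (neg_eq_zero.1 (neg_f₃_eq_zero hz)).symm⟩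

theorem eqOn2_DhatC_of_DhatC_eq_zero {g : SF2 n} (hg : EqOn2 U (DhatC g) 0)
    {K h₃ : ℂ → SuperAlg n} (hK : ∀ z ∈ U, HasDerivAt K (g.2.2.1 z - h₃ z) z)
    (h₂ : ℂ → SuperAlg n) : EqOn2 U (DhatC (K, g.1, h₂, h₃)) g := by
  obtain ⟨g₁_eq_zero, -, g₃_add_deriv_eq_zero, -⟩ := hg
  refine ⟨fun _ _ ↦ rfl, g₁_eq_zero.symm, fun z hz ↦ ?_,
    fun z hz ↦ (eq_neg_of_add_eq_zero_left (g₃_add_deriv_eq_zero hz)).symm⟩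
  calc h₃ z + deriv K z = h₃ z + (g.2.2.1 z - h₃ z) := by rw [(hK z hz).deriv]
    _ = g.2.2.1 z := add_sub_cancel _ _

theorem exists_DC_eq_DhatC_eq (hU : IsOpen U) (hsc : IsSimplyConnected U) {f g : SF2 n}
    (hf : HolOn2 U f) (hg : HolOn2 U g) (hDf : EqOn2 U (DC f) 0) (hDg : EqOn2 U (DhatC g) 0) :
    ∃ H : SF2 n, HolOn2 U H ∧ EqOn2 U (DC H) f ∧ EqOn2 U (DhatC H) g := by
  have := FiniteDimensional.complete ℂ (SuperAlg n)
  obtain ⟨hf₀, hf₁, -, -⟩ := hf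
  obtain ⟨hg₀, -, hg₂, -⟩ := hg
  obtain ⟨K, hK⟩ := isExactOn_of_isSimplyConnected hU hsc (hg₂.sub hf₁.neg)
  exact ⟨(K, g.1, f.1, -f.2.1),
    ⟨fun z hz ↦ (hK z hz).differentiableAt.differentiableWithinAt, hg₀, hf₀, hf₁.neg⟩,
    eqOn2_DC_of_DC_eq_zero hDf _ _, eqOn2_DhatC_of_DhatC_eq_zero hDg hK _⟩

theorem exists_eqOn_add_const_of_DC_eq_of_DhatC_eq (hU : IsOpen U) (hUc : IsPreconnected U)
    {H H' : SF2 n} (hH : DifferentiableOn ℂ H.1 U) (hH' : DifferentiableOn ℂ H'.1 U)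
    (hD : EqOn2 U (DC H') (DC H)) (hDhat : EqOn2 U (DhatC H') (DhatC H)) :
    ∃ c : SuperAlg n, EqOn H'.1 (fun z ↦ H.1 z + c) U ∧ EqOn H'.2.1 H.2.1 U ∧
      EqOn H'.2.2.1 H.2.2.1 U ∧ EqOn H'.2.2.2 H.2.2.2 U := by
  obtain ⟨eqOn₂, eqOn_neg₃, -, -⟩ := hD
  obtain ⟨eqOn₁, -, eqOn₃_add_deriv, -⟩ := hDhat
  have eqOn₃ : EqOn H'.2.2.2 H.2.2.2 U := fun z hz ↦ neg_injective (eqOn_neg₃ hz)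
  have eqOn_deriv : EqOn (deriv H'.1) (deriv H.1) U := fun z hz ↦
    add_left_cancel ((eqOn₃_add_deriv hz).trans (congrArg (· + deriv H.1 z) (eqOn₃ hz).symm))
  obtain ⟨c, hc⟩ := hU.exists_eq_add_of_deriv_eq hUc hH' hH eqOn_deriv
  exact ⟨c, hc, eqOn₁, eqOn₂, eqOn₃⟩

end Superfunctions

/-- Let `U ⊆ ℂ` be a nonempty open simply connected set.  Then
`D_C ∘ D_C = 0` and `D̂_C ∘ D̂_C = 0`, and the Poincaré lemma holds: for tuples `f`, `g` of
holomorphic functions on `U` with `D_C f = 0` and `D̂_C g = 0` on `U` there is a tuple `H` of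
holomorphic functions on `U` with `D_C H = f` and `D̂_C H = g` on `U`, and `H` is unique up to
adding a constant tuple `(c, 0, 0, 0)` with `c ∈ Λ`. -/
theorem statement1 (n : ℕ) (U : Set ℂ) (hne : U.Nonempty) (hU : IsOpen U)
    (hsc : SimplyConnectedSpace U) :
    (∀ h : SF2 n, DC (DC h) = 0) ∧ (∀ h : SF2 n, DhatC (DhatC h) = 0) ∧
    (∀ f g : SF2 n, HolOn2 U f → HolOn2 U g →
      EqOn2 U (DC f) 0 → EqOn2 U (DhatC g) 0 →
      ∃ H : SF2 n, HolOn2 U H ∧ EqOn2 U (DC H) f ∧ EqOn2 U (DhatC H) g ∧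
        ∀ H' : SF2 n, HolOn2 U H' → EqOn2 U (DC H') f → EqOn2 U (DhatC H') g →
          ∃ c : SuperAlg n,
            Set.EqOn H'.1 (fun z => H.1 z + c) U ∧
            Set.EqOn H'.2.1 H.2.1 U ∧
            Set.EqOn H'.2.2.1 H.2.2.1 U ∧
            Set.EqOn H'.2.2.2 H.2.2.2 U) := by
  refine ⟨DC_DC, DhatC_DhatC, fun f g hf hg hDf hDg ↦ ?_⟩
  have hUc : IsPreconnected U := isPreconnected_iff_preconnectedSpace.2 inferInstance
  obtain ⟨H, hH, hDH, hDhatH⟩ := exists_DC_eq_DhatC_eq hU hsc hf hg hDf hDg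
  exact ⟨H, hH, hDH, hDhatH, fun H' hH' hDH' hDhatH' ↦
    exists_eqOn_add_const_of_DC_eq_of_DhatC_eq hU hUc hH.1 hH'.1
      (hDH'.trans hDH.symm) (hDhatH'.trans hDhatH.symm)⟩

end
end

section
/- Let A = [[X, α],[β, Y]] be an even (k|l)-supermatrix over Λ with Y invertible, set m := k+l, and let i, j ∈ {1,…,k} (both indices even). Assume the (m−1)×(m−1) matrix A^{ij}, obtained from A by deleting row i and column j, is invertible over Λ. Then A^{ij} is (with the inherited indexing) an even (k−1|l)-supermatrix whose odd-odd block Y is invertible, and the quasideterminant |A|_{ij} := a_{ij} − Σ_{p≠j, q≠i} a_{ip}·((A^{ij})⁻¹)_{pq}·a_{qj} (where the rows of (A^{ij})⁻¹ are indexed by {1,…,m}∖{j} and its columns by {1,…,m}∖{i}) satisfies |A|_{ij}·ber(A^{ij}) = (−1)^{i+j}·ber(A). -/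
noncomputable section

open ExteriorAlgebra

/-- The determinant of a square matrix over a (possibly noncommutative) ring, given by the
Leibniz formula, the product over each permutation being taken in the canonical order of the
index set.  For matrices whose entries lie in a central commutative subring (such as `Λ₀ ⊆ Λ`)
this is the usual determinant. -/
def ncdet {R : Type*} [Ring R] {k : ℕ} (M : Matrix (Fin k) (Fin k) R) : R :=
  ∑ σ : Equiv.Perm (Fin k), ((Equiv.Perm.sign σ : ℤˣ) : ℤ) • (List.ofFn fun i => M (σ i) i).prod

/-- The even-even block `X` of a `(k|l)`-block matrix. -/
def Xblk (n k l : ℕ) (A : Matrix (Fin (k + l)) (Fin (k + l)) (SuperAlg n)) :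
    Matrix (Fin k) (Fin k) (SuperAlg n) :=
  fun i j => A (Fin.castAdd l i) (Fin.castAdd l j)

/-- The even-odd block `α` of a `(k|l)`-block matrix. -/
def alphaBlk (n k l : ℕ) (A : Matrix (Fin (k + l)) (Fin (k + l)) (SuperAlg n)) :
    Matrix (Fin k) (Fin l) (SuperAlg n) :=
  fun i j => A (Fin.castAdd l i) (Fin.natAdd k j)

/-- The odd-even block `β` of a `(k|l)`-block matrix. -/
def betaBlk (n k l : ℕ) (A : Matrix (Fin (k + l)) (Fin (k + l)) (SuperAlg n)) :
    Matrix (Fin l) (Fin k) (SuperAlg n) :=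
  fun i j => A (Fin.natAdd k i) (Fin.castAdd l j)

/-- The odd-odd block `Y` of a `(k|l)`-block matrix. -/
def Yblk (n k l : ℕ) (A : Matrix (Fin (k + l)) (Fin (k + l)) (SuperAlg n)) :
    Matrix (Fin l) (Fin l) (SuperAlg n) :=
  fun i j => A (Fin.natAdd k i) (Fin.natAdd k j)

/-- `A` is an even `(k|l)`-supermatrix: the diagonal blocks `X`, `Y` have entries in `Λ₀` and
the off-diagonal blocks `α`, `β` have entries in `Λ₁`. -/
def IsEvenSupermatrix (n k l : ℕ) (A : Matrix (Fin (k + l)) (Fin (k + l)) (SuperAlg n)) : Prop :=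
  (∀ i j, Xblk n k l A i j ∈ evenPart n) ∧ (∀ i j, Yblk n k l A i j ∈ evenPart n) ∧
  (∀ i j, alphaBlk n k l A i j ∈ oddPart n) ∧ (∀ i j, betaBlk n k l A i j ∈ oddPart n)

/-- The Berezinian `ber(A) = det(X − α·Y⁻¹·β)·det(Y)⁻¹` (defined when `Y` is invertible). -/
def ber (n k l : ℕ) (A : Matrix (Fin (k + l)) (Fin (k + l)) (SuperAlg n)) : SuperAlg n :=
  ncdet (Xblk n k l A - alphaBlk n k l A * Ring.inverse (Yblk n k l A) * betaBlk n k l A) *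
    Ring.inverse (ncdet (Yblk n k l A))

/-- The inverse Berezinian `ber*(A) = det(X)⁻¹·det(Y − β·X⁻¹·α)` (defined when `X` is
invertible). -/
def berStar (n k l : ℕ) (A : Matrix (Fin (k + l)) (Fin (k + l)) (SuperAlg n)) : SuperAlg n :=
  Ring.inverse (ncdet (Xblk n k l A)) *
    ncdet (Yblk n k l A - betaBlk n k l A * Ring.inverse (Xblk n k l A) * alphaBlk n k l A)
/-- The canonical (order-preserving) embedding of `Fin N` onto the complement of `i` in
`Fin M`, where `M = N + 1`; `skipIdx h i p` is the `p`-th element of `{0, …, M-1} ∖ {i}`. -/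
def skipIdx {N M : ℕ} (h : N + 1 = M) (i : Fin M) : Fin N → Fin M :=
  fun p => Fin.cast h ((Fin.cast h.symm i).succAbove p)

/-- The matrix `A^{ij}` obtained from the square matrix `A` by deleting row `i` and column `j`,
with rows and columns reindexed by the order-preserving identifications with `Fin N`. -/
def delRC {R : Type*} [Ring R] {N M : ℕ} (h : N + 1 = M) (A : Matrix (Fin M) (Fin M) R)
    (i j : Fin M) : Matrix (Fin N) (Fin N) R :=
  fun p q => A (skipIdx h i p) (skipIdx h j q)

/-- The Gelfand–Retakh quasideterminant
`|A|_{ij} = a_{ij} − Σ_{p≠j, q≠i} a_{ip}·((A^{ij})⁻¹)_{pq}·a_{qj}`, where the rows of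
`(A^{ij})⁻¹` are indexed by the complement of `j` and its columns by the complement of `i`
(both via their order-preserving identifications with `Fin N`). -/
def quasidet {R : Type*} [Ring R] {N M : ℕ} (h : N + 1 = M) (A : Matrix (Fin M) (Fin M) R)
    (i j : Fin M) : R :=
  A i j - ∑ p : Fin N, ∑ q : Fin N,
    A i (skipIdx h j p) * (Ring.inverse (delRC h A i j)) p q * A (skipIdx h i q) j

/-!
A quasideterminant is what a linear system sees: if `A^{ij}` is invertible there is a vector `w`
with `w j = 1` and `A w = |A|_{ij} e_i`. When `Y` is invertible and `i`, `j` are even, eliminating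
the odd coordinates of `w` leaves the same equation for the Schur complement `S = X - α Y⁻¹ β`,
with the same right-hand side `|A|_{ij}`. The entries of `S` are even, hence central, so Cramer's
rule turns this equation into `|A|_{ij} det S^{ij} = (-1)^{i+j} det S`. Finally, deleting an even
row and an even column of `A` does not touch `Y` and deletes the same row and column of `S`.
-/

open Matrix

section SchurComplement

variable {R m m' n : Type*} [Ring R] [Fintype n] [DecidableEq n]

/-- The Schur complement `X - α * Y⁻¹ * β` of the lower right block in the block matrix
`[[X, α], [β, Y]]` over a possibly noncommutative ring. The inverse is `Ring.inverse`, so the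
definition is meaningful only when `Y` is invertible. -/
def schurComplement (M : Matrix (m ⊕ n) (m ⊕ n) R) : Matrix m m R :=
  M.toBlocks₁₁ - M.toBlocks₁₂ * Ring.inverse M.toBlocks₂₂ * M.toBlocks₂₁

theorem schurComplement_submatrix_sumMap (M : Matrix (m ⊕ n) (m ⊕ n) R) (f g : m' → m) :
    schurComplement (M.submatrix (Sum.map f id) (Sum.map g id)) =
      (schurComplement M).submatrix f g :=
  rfl

theorem schurComplement_mulVec_of_mulVec_eq [Fintype m] {M : Matrix (m ⊕ n) (m ⊕ n) R}
    (hM : IsUnit M.toBlocks₂₂) {w : m ⊕ n → R} {c : m → R} (hw : M *ᵥ w = Sum.elim c 0) :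
    schurComplement M *ᵥ (w ∘ Sum.inl) = c := by
  rw [← fromBlocks_toBlocks M, fromBlocks_mulVec] at hw
  have upper : M.toBlocks₁₁ *ᵥ (w ∘ Sum.inl) + M.toBlocks₁₂ *ᵥ (w ∘ Sum.inr) = c :=
    congrArg (· ∘ Sum.inl) hw
  have lower : M.toBlocks₂₁ *ᵥ (w ∘ Sum.inl) + M.toBlocks₂₂ *ᵥ (w ∘ Sum.inr) = 0 :=
    congrArg (· ∘ Sum.inr) hw
  have solve : Ring.inverse M.toBlocks₂₂ *ᵥ (M.toBlocks₂₁ *ᵥ (w ∘ Sum.inl)) = -(w ∘ Sum.inr) := by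
    rw [eq_neg_of_add_eq_zero_left lower, mulVec_neg, mulVec_mulVec,
      Ring.inverse_mul_cancel _ hM, one_mulVec]
  rw [schurComplement, sub_mulVec, ← mulVec_mulVec, ← mulVec_mulVec, solve, mulVec_neg,
    sub_neg_eq_add, upper]

end SchurComplement

section CentralMatrices

variable {R : Type*} [Ring R]

theorem inverse_apply_mem_center {n : Type*} [Fintype n] [DecidableEq n] {M : Matrix n n R}
    (hM : ∀ p q, M p q ∈ Subring.center R) (hu : IsUnit M) (p q : n) :
    Ring.inverse M p q ∈ Subring.center R := by
  rw [Subring.mem_center_iff]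
  intro r
  -- An entrywise central matrix is one that commutes with the scalar matrices.
  have hcomm : Commute (diagonal fun _ => r) M := by
    ext a b
    rw [diagonal_mul, mul_diagonal]
    exact Subring.mem_center_iff.1 (hM a b) r
  obtain ⟨u, rfl⟩ := hu
  have hinv := congrFun₂ hcomm.units_inv_right p q
  rwa [diagonal_mul, mul_diagonal, ← Ring.inverse_unit] at hinv

theorem ncdet_map {C : Type*} [CommRing C] (f : C →+* R) {k : ℕ} (T : Matrix (Fin k) (Fin k) C) :
    ncdet (T.map f) = f T.det := by
  simp only [ncdet, det_apply, map_sum, Units.smul_def, map_zsmul, map_apply,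
    ← List.prod_ofFn, map_list_prod, List.map_ofFn, Function.comp_def]

theorem map_det_mul_apply_of_map_mulVec_eq_single {C n : Type*} [CommRing C] [Fintype n]
    [DecidableEq n] (f : C →+* R) {T : Matrix n n C} {w : n → R} {i : n} {r : R}
    (hw : T.map f *ᵥ w = Pi.single i r) (j : n) :
    f T.det * w j = f (T.adjugate j i) * r :=
  calc f T.det * w j
      = ((T.adjugate * T).map f *ᵥ w) j := by
        rw [adjugate_mul, smul_one_eq_diagonal, diagonal_map (map_zero f), mulVec_diagonal]
    _ = (T.adjugate.map f *ᵥ Pi.single i r) j := by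
        rw [Matrix.map_mul, ← mulVec_mulVec, hw]
    _ = f (T.adjugate j i) * r := by
        simp only [mulVec_single, Pi.smul_apply, col_apply, map_apply, MulOpposite.smul_eq_mul_unop,
          MulOpposite.unop_op]

theorem mul_ncdet_submatrix_of_mulVec_eq_single {k : ℕ}
    {S : Matrix (Fin (k + 1)) (Fin (k + 1)) R} (hS : ∀ p q, S p q ∈ Subring.center R)
    {w : Fin (k + 1) → R} {i : Fin (k + 1)} {r : R} (hw : S *ᵥ w = Pi.single i r)
    (j : Fin (k + 1)) :
    r * ncdet (S.submatrix i.succAbove j.succAbove) =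
      (-1 : ℤ) ^ ((i : ℕ) + (j : ℕ)) • (ncdet S * w j) := by
  let f := (Subring.center R).subtype
  obtain ⟨T, rfl⟩ : ∃ T : Matrix (Fin (k + 1)) (Fin (k + 1)) (Subring.center R), S = T.map f :=
    ⟨fun p q => ⟨S p q, hS p q⟩, rfl⟩
  have cramer := map_det_mul_apply_of_map_mulVec_eq_single f hw j
  have sign_sq : (-1 : R) ^ ((i : ℕ) + (j : ℕ)) * (-1) ^ ((i : ℕ) + (j : ℕ)) = 1 := by
    rw [← pow_add, Even.neg_one_pow ⟨_, rfl⟩]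
  rw [submatrix_map, ncdet_map, ncdet_map, cramer, adjugate_fin_succ_eq_det_submatrix,
    map_mul, map_pow, map_neg, map_one, zsmul_eq_mul, Int.cast_pow, Int.cast_neg, Int.cast_one,
    mul_assoc, ← mul_assoc, sign_sq, one_mul]
  exact Subring.mem_center_iff.1 (T.submatrix i.succAbove j.succAbove).det.2 r

end CentralMatrices

section Quasideterminant

variable {R : Type*} [Ring R]

theorem exists_mulVec_eq_single_quasidet {N M : ℕ} (h : N + 1 = M)
    (A : Matrix (Fin M) (Fin M) R) (i j : Fin M) (hdel : IsUnit (delRC h A i j)) :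
    ∃ w : Fin M → R, w j = 1 ∧ A *ᵥ w = Pi.single i (quasidet h A i j) := by
  subst h
  let c : Fin N → R := fun q => A (i.succAbove q) j
  let v : Fin N → R := Ring.inverse (delRC rfl A i j) *ᵥ c
  have hv : delRC rfl A i j *ᵥ v = c := by
    rw [mulVec_mulVec, Ring.mul_inverse_cancel _ hdel, one_mulVec]
  let w : Fin (N + 1) → R := j.insertNth 1 (-v)
  have hw (r : Fin (N + 1)) : (A *ᵥ w) r = A r j - ∑ p, A r (j.succAbove p) * v p := by
    simp only [w, mulVec, dotProduct, Fin.sum_univ_succAbove _ j, Fin.insertNth_apply_same,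
      Fin.insertNth_apply_succAbove, mul_one, Pi.neg_apply, mul_neg, Finset.sum_neg_distrib,
      sub_eq_add_neg]
  refine ⟨w, Fin.insertNth_apply_same .., funext fun r => ?_⟩
  rw [hw]
  rcases Fin.eq_self_or_eq_succAbove i r with rfl | ⟨q, rfl⟩
  · simp only [Pi.single_eq_same, quasidet, v, c, mulVec, dotProduct, Finset.mul_sum, mul_assoc]
    rfl
  · rw [Pi.single_eq_of_ne (Fin.succAbove_ne _ _), sub_eq_zero]
    exact (congrFun hv q).symm

/-- The matrix `A` with its rows and columns split into `k` even and `l` odd indices, so that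
Mathlib's block operations apply; its four blocks are definitionally the `Xblk`, `alphaBlk`,
`betaBlk` and `Yblk` of `A`. -/
abbrev blockForm {k l : ℕ} (A : Matrix (Fin (k + l)) (Fin (k + l)) R) :
    Matrix (Fin k ⊕ Fin l) (Fin k ⊕ Fin l) R :=
  A.submatrix finSumFinEquiv finSumFinEquiv

variable {k l : ℕ} (h : (k + l) + 1 = (k + 1) + l)

theorem skipIdx_castAdd_comp_finSumFinEquiv (i : Fin (k + 1)) :
    skipIdx h (Fin.castAdd l i) ∘ finSumFinEquiv = finSumFinEquiv ∘ Sum.map i.succAbove id := by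
  ext (p | p)
  · simp only [skipIdx, Fin.succAbove, Fin.lt_def, Function.comp_apply, Sum.map_inl,
      finSumFinEquiv_apply_left, Fin.val_cast, Fin.val_castAdd, Fin.val_castSucc]
    split_ifs <;> rfl
  · have hp : ¬(k + p : ℕ) < i := by omega
    simp only [skipIdx, Fin.succAbove, Fin.lt_def, Function.comp_apply, Sum.map_inr, id,
      finSumFinEquiv_apply_right, Fin.val_cast, Fin.val_castAdd, Fin.val_castSucc, Fin.val_natAdd,
      if_neg hp, Fin.val_succ]
    omega

variable (A : Matrix (Fin ((k + 1) + l)) (Fin ((k + 1) + l)) R) (i j : Fin (k + 1))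

theorem blockForm_delRC_castAdd :
    blockForm (delRC h A (Fin.castAdd l i) (Fin.castAdd l j)) =
      (blockForm A).submatrix (Sum.map i.succAbove id) (Sum.map j.succAbove id) := by
  change A.submatrix (skipIdx h _ ∘ finSumFinEquiv) (skipIdx h _ ∘ finSumFinEquiv) = _
  rw [skipIdx_castAdd_comp_finSumFinEquiv, skipIdx_castAdd_comp_finSumFinEquiv, submatrix_submatrix]

variable {A} in
theorem quasidet_mul_ncdet_schurComplement (hY : IsUnit (blockForm A).toBlocks₂₂)
    (hS : ∀ p q, schurComplement (blockForm A) p q ∈ Subring.center R)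
    (hdel : IsUnit (delRC h A (Fin.castAdd l i) (Fin.castAdd l j))) :
    quasidet h A (Fin.castAdd l i) (Fin.castAdd l j) *
        ncdet (schurComplement (blockForm (delRC h A (Fin.castAdd l i) (Fin.castAdd l j)))) =
      (-1 : ℤ) ^ ((i : ℕ) + (j : ℕ)) • ncdet (schurComplement (blockForm A)) := by
  obtain ⟨w, hwj, hw⟩ := exists_mulVec_eq_single_quasidet h A _ _ hdel
  have hblock : blockForm A *ᵥ (w ∘ finSumFinEquiv) =
      Sum.elim (Pi.single i (quasidet h A (Fin.castAdd l i) (Fin.castAdd l j))) 0 := by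
    rw [submatrix_mulVec_equiv, Function.comp_assoc, Equiv.self_comp_symm, Function.comp_id, hw,
      Pi.single_comp_equiv, finSumFinEquiv_symm_apply_castAdd, Sum.elim_single_zero]
  have hschur := schurComplement_mulVec_of_mulVec_eq hY hblock
  rw [blockForm_delRC_castAdd, schurComplement_submatrix_sumMap,
    mul_ncdet_submatrix_of_mulVec_eq_single hS hschur]
  simp [hwj]

end Quasideterminant

section ExteriorAlgebra

variable {K V : Type*} [CommRing K] [AddCommGroup V] [Module K V]

theorem commute_ι_mul_ι (g : ExteriorAlgebra K V) (a b : V) : Commute g (ι K a * ι K b) := by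
  have swap (x y : V) : ι K x * ι K y = -(ι K y * ι K x) :=
    eq_neg_of_add_eq_zero_left (ι_add_mul_swap x y)
  induction g using ExteriorAlgebra.induction with
  | algebraMap r => exact Algebra.commutes r _
  | ι x =>
    rw [commute_iff_eq, ← mul_assoc, swap x a, mul_assoc (ι K a), swap b x, neg_mul, mul_neg,
      mul_assoc]
  | mul x y hx hy => exact hx.mul_left hy
  | add x y hx hy => exact hx.add_left hy

theorem mem_center_of_mem_evenOdd_zero {x : ExteriorAlgebra K V}
    (hx : x ∈ CliffordAlgebra.evenOdd (0 : QuadraticForm K V) 0) :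
    x ∈ Subring.center (ExteriorAlgebra K V) := by
  refine Subring.mem_center_iff.2 fun g => ?_
  change Commute g x
  induction x, hx using CliffordAlgebra.even_induction with
  | algebraMap r => exact (Algebra.commutes r g).symm
  | add x y _ _ hx hy => exact hx.add_right hy
  | ι_mul_ι_mul a b x _ hx => exact (commute_ι_mul_ι g a b).mul_right hx

end ExteriorAlgebra

section Supermatrix

variable {n k l : ℕ}

theorem mul_mem_evenPart_of_mem_oddPart {x y : SuperAlg n} (hx : x ∈ oddPart n)
    (hy : y ∈ oddPart n) : x * y ∈ evenPart n :=
  CliffordAlgebra.evenOdd_mul_le _ 1 1 (Submodule.mul_mem_mul hx hy)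

namespace IsEvenSupermatrix

theorem schurComplement_mem_center {A : Matrix (Fin (k + l)) (Fin (k + l)) (SuperAlg n)}
    (hA : IsEvenSupermatrix n k l A) (hY : IsUnit (Yblk n k l A)) (p q : Fin k) :
    schurComplement (blockForm A) p q ∈ Subring.center (SuperAlg n) := by
  obtain ⟨hX, hYeven, hα, hβ⟩ := hA
  have hYinv := inverse_apply_mem_center (fun s t => mem_center_of_mem_evenOdd_zero (hYeven s t)) hY
  have hterm (s t : Fin l) : alphaBlk n k l A p s * Ring.inverse (Yblk n k l A) s t *
      betaBlk n k l A t q ∈ Subring.center (SuperAlg n) := by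
    rw [Subring.mem_center_iff.1 (hYinv s t), mul_assoc]
    exact mul_mem (hYinv s t)
      (mem_center_of_mem_evenOdd_zero (mul_mem_evenPart_of_mem_oddPart (hα p s) (hβ t q)))
  refine sub_mem (mem_center_of_mem_evenOdd_zero (hX p q)) ?_
  simp only [mul_apply, Finset.sum_mul]
  exact sum_mem fun t _ => sum_mem fun s _ => hterm s t

theorem delRC_castAdd {A : Matrix (Fin ((k + 1) + l)) (Fin ((k + 1) + l)) (SuperAlg n)}
    (hA : IsEvenSupermatrix n (k + 1) l A) (h : (k + l) + 1 = (k + 1) + l) (i j : Fin (k + 1)) :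
    IsEvenSupermatrix n k l (delRC h A (Fin.castAdd l i) (Fin.castAdd l j)) := by
  have entry_mem {P : Submodule ℂ (SuperAlg n)} (s t : Fin k ⊕ Fin l)
      (hst : blockForm A (Sum.map i.succAbove id s) (Sum.map j.succAbove id t) ∈ P) :
      blockForm (delRC h A (Fin.castAdd l i) (Fin.castAdd l j)) s t ∈ P := by
    rwa [blockForm_delRC_castAdd]
  obtain ⟨hX, hY, hα, hβ⟩ := hA
  exact ⟨fun p q => entry_mem (.inl p) (.inl q) (hX _ _),
    fun p q => entry_mem (.inr p) (.inr q) (hY _ _),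
    fun p q => entry_mem (.inl p) (.inr q) (hα _ _),
    fun p q => entry_mem (.inr p) (.inl q) (hβ _ _)⟩

end IsEvenSupermatrix

theorem Yblk_delRC_castAdd (h : (k + l) + 1 = (k + 1) + l)
    (A : Matrix (Fin ((k + 1) + l)) (Fin ((k + 1) + l)) (SuperAlg n)) (i j : Fin (k + 1)) :
    Yblk n k l (delRC h A (Fin.castAdd l i) (Fin.castAdd l j)) = Yblk n (k + 1) l A :=
  congrArg toBlocks₂₂ (blockForm_delRC_castAdd h A i j)

theorem ber_eq_ncdet_schurComplement (A : Matrix (Fin (k + l)) (Fin (k + l)) (SuperAlg n)) :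
    ber n k l A =
      ncdet (schurComplement (blockForm A)) * Ring.inverse (ncdet (Yblk n k l A)) :=
  rfl

end Supermatrix

/-- Let `A` be an even `(k+1|l)`-supermatrix over `Λ` with invertible odd-odd
block `Y`, and let `i`, `j` be even indices.  If the matrix `A^{ij}` obtained by deleting row
`i` and column `j` is invertible over `Λ`, then `A^{ij}` is (with the inherited indexing) an
even `(k|l)`-supermatrix whose odd-odd block is invertible, and the quasideterminant
`|A|_{ij}` satisfies `|A|_{ij}·ber(A^{ij}) = (−1)^{i+j}·ber(A)`. -/
theorem statement4 (n k l : ℕ) (h : (k + l) + 1 = (k + 1) + l)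
    (A : Matrix (Fin ((k + 1) + l)) (Fin ((k + 1) + l)) (SuperAlg n))
    (hA : IsEvenSupermatrix n (k + 1) l A) (hY : IsUnit (Yblk n (k + 1) l A))
    (i j : Fin ((k + 1) + l)) (hi : (i : ℕ) < k + 1) (hj : (j : ℕ) < k + 1)
    (hdel : IsUnit (delRC h A i j)) :
    IsEvenSupermatrix n k l (delRC h A i j) ∧
    IsUnit (Yblk n k l (delRC h A i j)) ∧
    quasidet h A i j * ber n k l (delRC h A i j) =
      ((-1 : ℤ) ^ ((i : ℕ) + (j : ℕ))) • ber n (k + 1) l A := by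
  obtain ⟨i, rfl⟩ : ∃ i' : Fin (k + 1), Fin.castAdd l i' = i := ⟨⟨i, hi⟩, rfl⟩
  obtain ⟨j, rfl⟩ : ∃ j' : Fin (k + 1), Fin.castAdd l j' = j := ⟨⟨j, hj⟩, rfl⟩
  have hS := hA.schurComplement_mem_center hY
  have hYdel := Yblk_delRC_castAdd h A i j
  refine ⟨hA.delRC_castAdd h i j, hYdel ▸ hY, ?_⟩
  rw [ber_eq_ncdet_schurComplement, ber_eq_ncdet_schurComplement, hYdel, ← mul_assoc,
    quasidet_mul_ncdet_schurComplement h i j hY hS hdel, smul_mul_assoc, Fin.val_castAdd,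
    Fin.val_castAdd]

end
end
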